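/- Let I_k = ∫₀^∞ λ^k e^{-λ} e^{-λ²/2} dλ and define R(k) = I_{k+1} / ((k+1) · I_k) for natural numbers k. Then there exist a constant C > 0 and a natural number K such that for all k ≥ K, R(k) ≤ C · √(log(k)/k). In particular, (k+1)·R(k) = o(k) as k → ∞. -/

import Mathlib

/-!
Integrating the derivative of `x ^ (k + 1) e^{-x} e^{-x²/2}` over `(0, ∞)` gives the recurrence
`(k + 1) I_k = I_{k+1} + I_{k+2}` (`I_recurrence`). With `s = √(k + 1)`, integrating
`x ^ k (x - s)² ≥ 0` against the same weight gives
`2 s I_{k+1} ≤ I_{k+2} + s² I_k ≤ 2 s² I_k`, so `I_{k+1} ≤ s I_k` (`I_succ_le`).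
Hence `(k + 1) R_k ≤ √(k + 1)`, which is stronger than both claims: the logarithmic factor is not
needed, since `log k ≥ 1` for `k ≥ 3`.
-/

open MeasureTheory

/-- `I k = ∫₀^∞ λ^k e^{-λ} e^{-λ²/2} dλ`. -/
noncomputable def I (k : ℕ) : ℝ :=
  ∫ x in Set.Ioi (0 : ℝ), x ^ k * Real.exp (-x) * Real.exp (-x ^ 2 / 2)

/-- `R k = I (k+1) / ((k+1) · I k)`. -/
noncomputable def R (k : ℕ) : ℝ := I (k + 1) / (((k : ℝ) + 1) * I k)

lemma I_integrable (k : ℕ) : IntegrableOn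
    (fun x : ℝ => x ^ k * Real.exp (-x) * Real.exp (-x ^ 2 / 2)) (Set.Ioi 0) := by
  have hΓ : IntegrableOn (fun x : ℝ => x ^ k * Real.exp (-x)) (Set.Ioi 0) := by
    refine (Real.GammaIntegral_convergent (s := (k : ℝ) + 1) (by positivity)).congr_fun
      (fun x _ => ?_) measurableSet_Ioi
    simp [mul_comm]
  refine Integrable.mono' hΓ (by fun_prop) ?_
  refine (ae_restrict_iff' measurableSet_Ioi).2 (Filter.Eventually.of_forall fun x hx => ?_)
  have hx0 : (0 : ℝ) < x := hx
  rw [Real.norm_of_nonneg (by positivity)]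
  refine mul_le_of_le_one_right (by positivity) (Real.exp_le_one_iff.2 ?_)
  nlinarith [sq_nonneg x]

lemma I_nonneg (k : ℕ) : 0 ≤ I k := by
  refine setIntegral_nonneg measurableSet_Ioi fun x hx => ?_
  have hx0 : (0 : ℝ) < x := hx
  positivity

lemma I_recurrence (k : ℕ) : ((k : ℝ) + 1) * I k = I (k + 1) + I (k + 2) := by
  set w : ℕ → ℝ → ℝ := fun n x => x ^ n * Real.exp (-x) * Real.exp (-x ^ 2 / 2) with hw
  have hint : ∀ n, Integrable (w n) (volume.restrict (Set.Ioi 0)) := I_integrable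
  have hderiv : ∀ x ∈ Set.Ici (0 : ℝ), HasDerivAt (w (k + 1))
      (((k : ℝ) + 1) * w k x - w (k + 1) x - w (k + 2) x) x := by
    intro x _
    have h1 : HasDerivAt (fun x : ℝ => Real.exp (-x)) (Real.exp (-x) * (-1)) x :=
      (hasDerivAt_id x).neg.exp
    have h2 : HasDerivAt (fun x : ℝ => Real.exp (-x ^ 2 / 2))
        (Real.exp (-x ^ 2 / 2) * (-x)) x := by
      have := (((hasDerivAt_pow 2 x).fun_neg).div_const 2).exp
      convert this using 1
      norm_num
      ring
    have := ((hasDerivAt_pow (k + 1) x).fun_mul h1).fun_mul h2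
    refine this.congr_deriv ?_
    simp only [w, Nat.add_sub_cancel]
    push_cast
    ring
  have hlim : Filter.Tendsto (w (k + 1)) Filter.atTop (nhds 0) := by
    refine squeeze_zero' ?_ ?_ (Real.tendsto_pow_mul_exp_neg_atTop_nhds_zero (k + 1))
    · filter_upwards [Filter.eventually_ge_atTop 0] with x hx
      positivity
    · filter_upwards [Filter.eventually_ge_atTop 0] with x hx
      refine mul_le_of_le_one_right (by positivity) (Real.exp_le_one_iff.2 ?_)
      nlinarith [sq_nonneg x]
  have hsub : Integrable (fun x => ((k : ℝ) + 1) * w k x - w (k + 1) x)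
      (volume.restrict (Set.Ioi 0)) := ((hint k).const_mul _).sub (hint (k + 1))
  have key := integral_Ioi_of_hasDerivAt_of_tendsto' hderiv (hsub.sub (hint (k + 2))) hlim
  rw [integral_sub hsub (hint (k + 2)),
    integral_sub ((hint k).const_mul _) (hint (k + 1)), integral_const_mul] at key
  have h0 : w (k + 1) 0 = 0 := by simp [hw]
  rw [h0] at key
  change ((k : ℝ) + 1) * I k - I (k + 1) - I (k + 2) = 0 - 0 at key
  linarith

lemma two_mul_I_succ_le (k : ℕ) (s : ℝ) : 2 * s * I (k + 1) ≤ I (k + 2) + s ^ 2 * I k := by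
  have h : (∫ x in Set.Ioi (0 : ℝ),
      2 * s * (x ^ (k + 1) * Real.exp (-x) * Real.exp (-x ^ 2 / 2))) ≤
      ∫ x in Set.Ioi (0 : ℝ), (x ^ (k + 2) * Real.exp (-x) * Real.exp (-x ^ 2 / 2) +
        s ^ 2 * (x ^ k * Real.exp (-x) * Real.exp (-x ^ 2 / 2))) := by
    refine setIntegral_mono_on ((I_integrable (k + 1)).const_mul _)
      ((I_integrable (k + 2)).add ((I_integrable k).const_mul _)) measurableSet_Ioi
      fun x hx => ?_
    have hx0 : (0 : ℝ) < x := hx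
    have : 0 ≤ x ^ k * Real.exp (-x) * Real.exp (-x ^ 2 / 2) * (x - s) ^ 2 := by positivity
    linear_combination this
  rw [integral_add (I_integrable (k + 2)) ((I_integrable k).const_mul _),
    integral_const_mul, integral_const_mul] at h
  exact h

lemma I_succ_le (k : ℕ) : I (k + 1) ≤ Real.sqrt ((k : ℝ) + 1) * I k := by
  have hs : 0 < Real.sqrt ((k : ℝ) + 1) := by positivity
  have hsq : Real.sqrt ((k : ℝ) + 1) ^ 2 = (k : ℝ) + 1 := Real.sq_sqrt (by positivity)
  have h := two_mul_I_succ_le k (Real.sqrt ((k : ℝ) + 1))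
  have hrec := I_recurrence k
  rw [← hsq] at hrec
  refine le_of_mul_le_mul_left ?_ hs
  linarith [I_nonneg (k + 1)]

lemma R_nonneg (k : ℕ) : 0 ≤ R k :=
  div_nonneg (I_nonneg _) (mul_nonneg (by positivity) (I_nonneg _))

lemma succ_mul_R_le (k : ℕ) : ((k : ℝ) + 1) * R k ≤ Real.sqrt ((k : ℝ) + 1) := by
  have hk : (k : ℝ) + 1 ≠ 0 := by positivity
  have h : ((k : ℝ) + 1) * R k = I (k + 1) / I k := by
    rw [R, ← mul_div_assoc, mul_div_mul_left _ _ hk]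
  rw [h]
  exact div_le_of_le_mul₀ (I_nonneg k) (Real.sqrt_nonneg _) (I_succ_le k)

/-- There are `C > 0` and `K` such that `R k ≤ C·√(log k / k)` for all `k ≥ K`;
in particular `(k+1)·R k = o(k)` as `k → ∞`. -/
theorem stmt1 :
    (∃ C : ℝ, 0 < C ∧ ∃ K : ℕ, ∀ k : ℕ, K ≤ k →
      R k ≤ C * Real.sqrt (Real.log k / k)) ∧
    (fun k : ℕ => ((k : ℝ) + 1) * R k) =o[Filter.atTop] (fun k : ℕ => (k : ℝ)) := by
  refine ⟨⟨1, one_pos, 3, fun k hk => ?_⟩, ?_⟩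
  · have hk3 : (3 : ℝ) ≤ k := by exact_mod_cast hk
    have hlog : 1 ≤ Real.log k := by
      rw [Real.le_log_iff_exp_le (by linarith)]
      linarith [Real.exp_one_lt_d9]
    rw [one_mul]
    refine Real.le_sqrt_of_sq_le ?_
    rw [le_div_iff₀ (by linarith)]
    have hR := R_nonneg k
    have h := pow_le_pow_left₀ (mul_nonneg (by linarith) hR) (succ_mul_R_le k) 2
    rw [Real.sq_sqrt (by linarith)] at h
    have h' : ((k : ℝ) + 1) * R k ^ 2 ≤ 1 := by
      refine le_of_mul_le_mul_left (a := (k : ℝ) + 1) ?_ (by linarith)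
      linarith
    nlinarith [sq_nonneg (R k)]
  · rw [Asymptotics.isLittleO_iff]
    intro c hc
    filter_upwards [Filter.eventually_ge_atTop 1,
      tendsto_natCast_atTop_atTop.eventually_ge_atTop (2 / c ^ 2)] with k hk1 hk2
    have hk1' : (1 : ℝ) ≤ k := by exact_mod_cast hk1
    rw [Real.norm_of_nonneg (mul_nonneg (by positivity) (R_nonneg k)),
      Real.norm_of_nonneg (by positivity)]
    refine (succ_mul_R_le k).trans (Real.sqrt_le_iff.2 ⟨by positivity, ?_⟩)
    -- `k ≥ 2 / c²` gives `k + 1 ≤ 2 k ≤ (c k)²`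
    rw [div_le_iff₀ (by positivity)] at hk2
    nlinarith
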